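/- For every instance 𝓘 of the knapsack problem and every capacity C ≥ 0, the modified greedy algorithm is a 2-approximation: v(Opt(𝓘,C)) ≤ 2·v(MGreedy(𝓘,C)). -/

import Mathlib

/-! The proof compares the optimum with the fractional relaxation. Let `P` be the greedy set and
`s` the first item that overflows it, with density `ρ = v s / l s`. The surplus `v i - ρ * l i` is
nonnegative on `P` and nonpositive on every other item of size at most `C`, so among all
feasible sets `P` has the largest total surplus. Hence
`v(S) ≤ v(P) + ρ * (C - l(P)) ≤ v(P) + ρ * l s = v(P) + v(s)`,
and the algorithm returns the larger of `v(P)` and `v(s)`. If no item overflows, `P` contains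
every item that fits alone, hence all of `S`. -/

/-- The maximal prefix of a list of items fitting into capacity `C`:
scan the list in order, adding each item as long as it fits the remaining
capacity, and stop at the first item that does not fit. -/
def prefixPack {α R : Type*} [LinearOrder R] [Sub R] (size : α → R) : R → List α → List α
  | _, [] => []
  | C, x :: xs => if size x ≤ C then x :: prefixPack size (C - size x) xs else []

/-- The tie-broken density order: `DSucc v l t i j` means `d̃(i) ≻ d̃(j)`,
i.e. `v i / l i > v j / l j`, or the densities are equal and `t i > t j`. -/
def DSucc {n : ℕ} (v l : Fin n → ℚ) (t : Fin n → Fin n) (i j : Fin n) : Prop :=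
  v j / l j < v i / l i ∨ (v i / l i = v j / l j ∧ t j < t i)

/-- `D` is the list of all items of size at most `C`, sorted strictly
decreasingly with respect to the tie-broken density order `d̃`. -/
def IsDensityList {n : ℕ} (v l : Fin n → ℚ) (t : Fin n → Fin n) (C : ℚ)
    (D : List (Fin n)) : Prop :=
  D.Nodup ∧ (∀ i, i ∈ D ↔ l i ≤ C) ∧ D.Pairwise (DSucc v l t)

/-- The value packed by the modified greedy algorithm for capacity `C`, given the
density-sorted list `D` of all items of size at most `C`: let `P` be the maximal
prefix of `D` fitting into `C` and `s` the item of `D` following `P` (if it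
exists); return `v(P)` if `s` does not exist or `v(P) ≥ v(s)`, and `v(s)`
otherwise. -/
def mgreedyVal {n : ℕ} (v l : Fin n → ℚ) (C : ℚ) (D : List (Fin n)) : ℚ :=
  let P := prefixPack l C D
  match D[P.length]? with
  | none => (P.map v).sum
  | some s => if v s ≤ (P.map v).sum then (P.map v).sum else v s

/-- `prefixPack` cuts its input into the packed prefix and a remainder, and the first item of the
remainder, if there is one, overflows the capacity. -/
theorem prefixPack_spec {α : Type*} (l : α → ℚ) (D : List α) (C : ℚ) :
    ∃ R, D = prefixPack l C D ++ R ∧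
      ∀ s ∈ R.head?, C < ((prefixPack l C D).map l).sum + l s := by
  induction D generalizing C with
  | nil => exact ⟨[], by simp [prefixPack]⟩
  | cons x xs ih =>
    by_cases h : l x ≤ C
    · obtain ⟨R, hR, hs⟩ := ih (C - l x)
      refine ⟨R, ?_, fun s hsR => ?_⟩
      · simpa [prefixPack, h] using hR
      · have := hs s hsR
        simp only [prefixPack, h, if_true, List.map_cons, List.sum_cons]
        linarith
    · exact ⟨x :: xs, by simp [prefixPack, h], by simpa [prefixPack, h] using not_le.1 h⟩

/-- The exchange step of the fractional bound, applied with `w` the surplus of an item over the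
density of the overflowing item: `S` can only lose surplus compared with `P`. -/
theorem sum_le_sum_of_sign {ι : Type*} [DecidableEq ι] (w : ι → ℚ) (S P : Finset ι)
    (hP : ∀ i ∈ P, 0 ≤ w i) (hS : ∀ i ∈ S, i ∉ P → w i ≤ 0) :
    ∑ i ∈ S, w i ≤ ∑ i ∈ P, w i := by
  calc ∑ i ∈ S, w i ≤ ∑ i ∈ S ∩ P, w i := by
        rw [← Finset.sum_inter_add_sum_sdiff S P]
        have : ∑ i ∈ S \ P, w i ≤ 0 := Finset.sum_nonpos fun i hi => by
          rw [Finset.mem_sdiff] at hi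
          exact hS i hi.1 hi.2
        linarith
    _ ≤ ∑ i ∈ P, w i :=
        Finset.sum_le_sum_of_subset_of_nonneg Finset.inter_subset_right fun i hi _ => hP i hi

/-- The modified greedy algorithm is a 2-approximation for the
knapsack problem: for every instance and every capacity `C ≥ 0`,
`v(Opt(𝓘,C)) ≤ 2 · v(MGreedy(𝓘,C))`. -/
theorem mgreedy_two_approx {n : ℕ} (v l : Fin n → ℚ)
    (hv : ∀ i, 0 ≤ v i) (hl : ∀ i, 0 < l i)
    (t : Fin n → Fin n) (ht : Function.Bijective t)
    (C : ℚ) (hC : 0 ≤ C)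
    (D : List (Fin n)) (hD : IsDensityList v l t C D)
    (S : Finset (Fin n)) (hS : ∑ i ∈ S, l i ≤ C) :
    ∑ i ∈ S, v i ≤ 2 * mgreedyVal v l C D := by
  obtain ⟨hnd, hmem, hsort⟩ := hD
  obtain ⟨R, hR, hover⟩ := prefixPack_spec l D C
  unfold mgreedyVal
  generalize prefixPack l C D = P at *
  subst hR
  have hget : (P ++ R)[P.length]? = R.head? := by
    rw [List.getElem?_append_right le_rfl, Nat.sub_self, ← List.head?_eq_getElem?]
  simp only [hget]
  have hPnd : P.Nodup := hnd.of_append_left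
  have hSmem : ∀ i ∈ S, i ∈ P ++ R := fun i hi =>
    (hmem i).2 ((Finset.single_le_sum (fun j _ => (hl j).le) hi).trans hS)
  have hvP : (P.map v).sum = ∑ i ∈ P.toFinset, v i := (List.sum_toFinset v hPnd).symm
  have hlP : (P.map l).sum = ∑ i ∈ P.toFinset, l i := (List.sum_toFinset l hPnd).symm
  rw [hvP]
  rw [hlP] at hover
  cases R with
  | nil =>
    have hsub : S ⊆ P.toFinset := fun i hi => by simpa using hSmem i hi
    have h1 := Finset.sum_le_sum_of_subset_of_nonneg hsub fun i _ _ => hv i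
    have h2 : 0 ≤ ∑ i ∈ P.toFinset, v i := Finset.sum_nonneg fun i _ => hv i
    simp only [List.head?_nil]
    linarith
  | cons s R =>
    have hdens : ∀ {i j}, DSucc v l t i j → v j / l j ≤ v i / l i := fun h =>
      h.elim le_of_lt fun h => h.1.ge
    rw [List.pairwise_append, List.pairwise_cons] at hsort
    obtain ⟨-, ⟨hsR, -⟩, hPR⟩ := hsort
    have hover' := hover s rfl
    have hρ : 0 ≤ v s / l s := div_nonneg (hv s) (hl s).le
    have hρs : v s / l s * l s = v s := div_mul_cancel₀ _ (hl s).ne'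
    generalize hρdef : v s / l s = ρ at hρ hρs
    have key := sum_le_sum_of_sign (fun i => v i - ρ * l i) S P.toFinset
      (fun i hi => by
        have h := hdens (hPR i (List.mem_toFinset.1 hi) s List.mem_cons_self)
        rw [hρdef, le_div_iff₀ (hl i)] at h
        exact sub_nonneg.2 h)
      (fun i hi hiP => by
        have hiR : i ∈ s :: R :=
          (List.mem_append.1 (hSmem i hi)).resolve_left fun h => hiP (List.mem_toFinset.2 h)
        rcases List.mem_cons.1 hiR with rfl | hiR
        · exact (sub_eq_zero.2 hρs.symm).le
        · have h := hdens (hsR i hiR)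
          rw [hρdef, div_le_iff₀ (hl i)] at h
          exact sub_nonpos.2 h)
    simp only [Finset.sum_sub_distrib, ← Finset.mul_sum] at key
    have hbound : ∑ i ∈ S, v i ≤ ∑ i ∈ P.toFinset, v i + v s := by
      have := mul_le_mul_of_nonneg_left (hS.trans hover'.le) hρ
      rw [mul_add, hρs] at this
      linarith
    simp only [List.head?_cons]
    split_ifs with h <;> linarith
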